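/- arXiv:2204.02628 — 2 statements merged into one kernel-verified Lean document; each statement's English description precedes it below -/
import Mathlib

section
/- Fix an integer t ≥ 1 and apply the construction in the context with f = χ_t, M = 3·2^(t+1), ν = 1, a = (2^(t+1)−3)², and b = 3·2^(t+2), obtaining the sequence ξ_t(n). Then ξ_t(n) / [ (sin(π/2^t)/(2^t · √(3π))) · (3·2^t/π)^(2n+2) · 2^(2n+1) · n! · √n / (3·2^(t+2))^n · e^(π²/(3·2^(t+1))) ] → 1 as n → ∞. -/
/-- The Fourier coefficient `G_f^{(ν)}(k)` of a function `f : ℤ → ℝ` of period `M`. -/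
noncomputable def Gf (M : ℕ) (f : ℤ → ℝ) (ν : ℕ) (k : ℕ) : ℝ :=
  if ν = 0 then
    (2 / Real.sqrt M) * ∑ m ∈ Finset.range M, f m * Real.sin (2 * Real.pi * m * k / M)
  else
    (2 / Real.sqrt M) * ∑ m ∈ Finset.range M, f m * Real.cos (2 * Real.pi * m * k / M)

/-- `C_n = (−1)^(n+1) (M^(2n+ν)/(2n+ν+1)) ∑_{m=1}^M f(m) B_{2n+ν+1}(m/M)`. -/
noncomputable def Cf (M : ℕ) (f : ℤ → ℝ) (ν : ℕ) (n : ℕ) : ℝ :=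
  (-1) ^ (n + 1) * ((M : ℝ) ^ (2 * n + ν) / (2 * n + ν + 1)) *
    ∑ m ∈ Finset.Icc 1 M,
      f m * (((Polynomial.bernoulli (2 * n + ν + 1)).eval ((m : ℚ) / (M : ℚ)) : ℚ) : ℝ)

/-- `D_n = b^(−n) ∑_{k=0}^n C(n,k) a^(n−k) C_k`. -/
noncomputable def Df (M : ℕ) (f : ℤ → ℝ) (ν a b : ℕ) (n : ℕ) : ℝ :=
  ((b : ℝ) ^ n)⁻¹ *
    ∑ k ∈ Finset.range (n + 1), (n.choose k : ℝ) * (a : ℝ) ^ (n - k) * Cf M f ν k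

/-- The unsigned Stirling number of the first kind `s(n,j)`: the coefficient of `X^j`
in `X (X+1) (X+2) ⋯ (X+n−1)`. -/
noncomputable def stirling1 (n j : ℕ) : ℝ :=
  (∏ i ∈ Finset.range n, (Polynomial.X + Polynomial.C (i : ℝ))).coeff j

/-- `ξ(0) = D_0` and `ξ(n) = (1/n!) ∑_{m=0}^{n−1} s(n, n−m) D_{n−m}` for `n ≥ 1`. -/
noncomputable def xif (M : ℕ) (f : ℤ → ℝ) (ν a b : ℕ) : ℕ → ℝ
  | 0 => Df M f ν a b 0
  | n + 1 => (1 / ((n + 1).factorial : ℝ)) *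
      ∑ m ∈ Finset.range (n + 1), stirling1 (n + 1) (n + 1 - m) * Df M f ν a b (n + 1 - m)

/-- The periodic function `χ_t` of period `3·2^(t+1)` from the strange identity for the
Kontsevich–Zagier series of the torus knot `T(3, 2^t)`. -/
noncomputable def chiT (t : ℕ) (n : ℤ) : ℝ :=
  if n % (3 * 2 ^ (t + 1)) = (2 ^ (t + 1) - 3) % (3 * 2 ^ (t + 1)) ∨
      n % (3 * 2 ^ (t + 1)) = (2 ^ (t + 2) + 3) % (3 * 2 ^ (t + 1)) then -(1 / 2)
  else if n % (3 * 2 ^ (t + 1)) = (2 ^ (t + 1) + 3) % (3 * 2 ^ (t + 1)) ∨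
      n % (3 * 2 ^ (t + 1)) = (2 ^ (t + 2) - 3) % (3 * 2 ^ (t + 1)) then 1 / 2
  else 0

section FishburnAux
open Filter Topology

theorem dct_range (h : ℕ → ℕ → ℝ) (L bound : ℕ → ℝ) (N : ℕ → ℕ) (hN : Tendsto N atTop atTop)
    (hb : Summable bound) (hlim : ∀ m, Tendsto (fun n => h n m) atTop (𝓝 (L m)))
    (hbd : ∀ n m, m < N n → |h n m| ≤ bound m) (hb0 : ∀ m, 0 ≤ bound m) :
    Tendsto (fun n => ∑ m ∈ Finset.range (N n), h n m) atTop (𝓝 (∑' m, L m)) := by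
  have key := tendsto_tsum_of_dominated_convergence (𝓕 := atTop)
    (f := fun n m => if m < N n then h n m else 0) (g := L) hb ?_ ?_
  · refine key.congr fun n => ?_
    rw [tsum_eq_sum (s := Finset.range (N n))]
    · exact Finset.sum_congr rfl fun m hm => if_pos (Finset.mem_range.1 hm)
    · intro m hm
      exact if_neg (by simpa using hm)
  · intro m
    refine (hlim m).congr' ?_
    filter_upwards [hN.eventually_gt_atTop m] with n hn
    simp [hn]
  · refine Eventually.of_forall fun n m => ?_
    by_cases hm : m < N n
    · simpa [hm] using hbd n m hm
    · simpa [hm] using hb0 m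

/-- `UU n m = s(n, n-m)`. -/
def UU : ℕ → ℕ → ℕ
  | 0, 0 => 1
  | 0, _ + 1 => 0
  | n + 1, 0 => UU n 0
  | n + 1, m + 1 => UU n (m + 1) + n * UU n m

theorem UU_zero (n : ℕ) : UU n 0 = 1 := by
  induction n with
  | zero => rfl
  | succ n ih => rw [UU, ih]

theorem UU_gt (n : ℕ) : ∀ m, n < m → UU n m = 0 := by
  induction n with
  | zero => intro m hm; cases m with
    | zero => omega
    | succ m => rfl
  | succ n ih => intro m hm; cases m with
    | zero => omega
    | succ m => rw [UU, ih _ (by omega), ih _ (by omega)]; simp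

theorem pow_bern (n k : ℕ) : n ^ (k + 1) + (k + 1) * n ^ k ≤ (n + 1) ^ (k + 1) := by
  induction k with
  | zero => simp
  | succ k ih =>
    calc _ ≤ (n ^ (k + 1) + (k + 1) * n ^ k) * (n + 1) := by
          have : 0 ≤ (k + 1) * n ^ k := Nat.zero_le _
          rw [pow_succ n (k + 1), pow_succ n k]
          nlinarith
      _ ≤ (n + 1) ^ (k + 1) * (n + 1) := by gcongr
      _ = _ := by ring

theorem UU_upper (n : ℕ) : ∀ m, 2 ^ m * m.factorial * UU n m ≤ n ^ (2 * m) := by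
  induction n with
  | zero => intro m; cases m <;> simp [UU]
  | succ n ih => intro m; cases m with
    | zero => simp [UU_zero]
    | succ m =>
      rw [UU, Nat.factorial_succ]
      have h1 := ih (m + 1)
      have h2 := ih m
      have h3 : n ^ (2 * (m + 1)) + 2 * (m + 1) * n * n ^ (2 * m) ≤ (n + 1) ^ (2 * (m + 1)) := by
        have := pow_bern n (2 * m + 1)
        calc _ = n ^ (2 * m + 1 + 1) + (2 * m + 1 + 1) * n ^ (2 * m + 1) := by ring
          _ ≤ _ := this
          _ = _ := by ring
      calc _ = 2 ^ (m + 1) * (m + 1).factorial * UU n (m + 1)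
            + 2 * (m + 1) * n * (2 ^ m * m.factorial * UU n m) := by
              rw [Nat.factorial_succ]; ring
        _ ≤ n ^ (2 * (m + 1)) + 2 * (m + 1) * n * n ^ (2 * m) := by gcongr
        _ ≤ _ := h3

theorem UU_lower (n : ℕ) : ∀ m, n.descFactorial (2 * m) ≤ 2 ^ m * m.factorial * UU n m := by
  induction n with
  | zero => intro m; cases m with
    | zero => simp [UU]
    | succ m => simp [Nat.mul_add]
  | succ n ih => intro m; cases m with
    | zero => simp [UU_zero]
    | succ m =>
      rw [UU]
      have h1 := ih (m + 1)
      have h2 := ih m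
      have h3 : (n + 1).descFactorial (2 * (m + 1)) ≤
          n.descFactorial (2 * (m + 1)) + 2 * (m + 1) * n * n.descFactorial (2 * m) := by
        have e : 2 * (m + 1) = 2 * m + 1 + 1 := by ring
        rw [e, Nat.succ_descFactorial_succ, Nat.descFactorial_succ n (2 * m + 1),
          Nat.descFactorial_succ n (2 * m)]
        generalize n.descFactorial (2 * m) = x
        rcases le_or_gt (2 * m + 1) n with h | h
        · obtain ⟨d, rfl⟩ := Nat.exists_eq_add_of_le h
          have e1 : 2 * m + 1 + d - 2 * m = d + 1 := by omega
          have e2 : 2 * m + 1 + d - (2 * m + 1) = d := by omega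
          rw [e1, e2]
          have : (2 * m + 1 + d + 1) * (d + 1) ≤ d * (d + 1) + (2 * m + 1 + 1) * (2 * m + 1 + d) := by
            nlinarith
          nlinarith
        · have e1 : n - 2 * m = 0 := by omega
          rw [e1]; simp
      calc _ ≤ _ := h3
        _ ≤ 2 ^ (m + 1) * (m + 1).factorial * UU n (m + 1)
            + 2 * (m + 1) * n * (2 ^ m * m.factorial * UU n m) := by gcongr
        _ = _ := by
              rw [Nat.factorial_succ]; ring

theorem UU_bound (n : ℕ) : ∀ m, 4 ^ m * m.factorial * UU n m ≤ (2 * n).descFactorial (2 * m) := by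
  induction n with
  | zero => intro m; cases m <;> simp [UU]
  | succ n ih => intro m; cases m with
    | zero => simp [UU_zero]
    | succ m =>
      rcases lt_or_ge n m with hm | hm
      · rw [UU, UU_gt n m hm, UU_gt n (m + 1) (by omega)]; simp
      rw [UU]
      have h1 := ih (m + 1)
      have h2 := ih m
      have h3 : (2 * n).descFactorial (2 * (m + 1)) + 4 * (m + 1) * n * (2 * n).descFactorial (2 * m)
          ≤ (2 * (n + 1)).descFactorial (2 * (m + 1)) := by
        have e : 2 * (m + 1) = 2 * m + 1 + 1 := by ring
        have e' : 2 * (n + 1) = 2 * n + 1 + 1 := by ring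
        rw [e, e', Nat.succ_descFactorial_succ, Nat.succ_descFactorial_succ,
          Nat.descFactorial_succ, Nat.descFactorial_succ]
        generalize (2 * n).descFactorial (2 * m) = x
        obtain ⟨d, rfl⟩ := Nat.exists_eq_add_of_le hm
        have e1 : 2 * (m + d) - 2 * m = 2 * d := by omega
        have e2 : 2 * (m + d) - (2 * m + 1) ≤ 2 * d := by omega
        rw [e1]
        calc _ ≤ 2 * d * (2 * d * x) + 4 * (m + 1) * (m + d) * x := by gcongr
          _ ≤ _ := by
            have : 2 * d * (2 * d) + 4 * (m + 1) * (m + d) ≤ 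
              (2 * (m + d) + 1 + 1) * (2 * (m + d) + 1) := by nlinarith
            nlinarith
      calc _ = 4 ^ (m + 1) * (m + 1).factorial * UU n (m + 1)
            + 4 * (m + 1) * n * (4 ^ m * m.factorial * UU n m) := by
              rw [Nat.factorial_succ]; ring
        _ ≤ _ := by gcongr
        _ ≤ _ := h3

theorem desc_lim (c d : ℕ) (j : ℕ) :
    Tendsto (fun n : ℕ => ((c * n + d).descFactorial j : ℝ) / (n : ℝ) ^ j) atTop
      (𝓝 ((c : ℝ) ^ j)) := by
  rcases Nat.eq_zero_or_pos c with rfl | hc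
  · cases j with
    | zero => simp
    | succ j =>
      have h0 : Tendsto (fun n : ℕ => (d.descFactorial (j + 1) : ℝ) / (n : ℝ) ^ (j + 1)) atTop (𝓝 0) :=
        Tendsto.div_atTop tendsto_const_nhds
          ((tendsto_pow_atTop (by omega)).comp tendsto_natCast_atTop_atTop)
      simpa using h0
  induction j with
  | zero => simp
  | succ j ih =>
    have h1 : Tendsto (fun n : ℕ => (c : ℝ) + ((d : ℝ) - j) * (n : ℝ)⁻¹) atTop (𝓝 (c : ℝ)) := by
      have := (tendsto_inv_atTop_nhds_zero_nat (𝕜 := ℝ)).const_mul ((d : ℝ) - j)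
      simpa using this.const_add (c : ℝ)
    have := h1.mul ih
    rw [pow_succ']
    refine this.congr' ?_
    filter_upwards [eventually_ge_atTop (j + 1)] with n hn
    have hn1 : 0 < n := by omega
    have hn0 : (n : ℝ) ≠ 0 := by positivity
    have hle : j ≤ c * n + d := by nlinarith
    rw [Nat.descFactorial_succ]
    push_cast [Nat.cast_sub hle]
    field_simp
    ring

theorem UU_lim (m : ℕ) :
    Tendsto (fun n : ℕ => (UU n m : ℝ) / ((2 * n + 1).descFactorial (2 * m) : ℝ)) atTop
      (𝓝 (1 / (8 ^ m * m.factorial))) := by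
  have h1 : Tendsto (fun n : ℕ => (UU n m : ℝ) / (n : ℝ) ^ (2 * m)) atTop
      (𝓝 (1 / (2 ^ m * m.factorial))) := by
    have hl := (desc_lim 1 0 (2 * m)).div_const (2 ^ m * m.factorial : ℝ)
    refine tendsto_of_tendsto_of_tendsto_of_le_of_le' (by simpa using hl)
      (tendsto_const_nhds (x := 1 / (2 ^ m * m.factorial : ℝ))) ?_ ?_
    · filter_upwards [eventually_gt_atTop 0] with n hn
      have h : ((n.descFactorial (2 * m) : ℕ) : ℝ) ≤ ((2 ^ m * m.factorial * UU n m : ℕ) : ℝ) :=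
        Nat.cast_le.2 (UU_lower n m)
      push_cast at h
      have hn' : (0 : ℝ) < n := by positivity
      rw [div_div, div_le_div_iff₀ (by positivity) (by positivity)]
      nlinarith [mul_le_mul_of_nonneg_right h (by positivity : (0 : ℝ) ≤ (n : ℝ) ^ (2 * m))]
    · filter_upwards [eventually_gt_atTop 0] with n hn
      have h : ((2 ^ m * m.factorial * UU n m : ℕ) : ℝ) ≤ ((n ^ (2 * m) : ℕ) : ℝ) :=
        Nat.cast_le.2 (UU_upper n m)
      push_cast at h
      have hn' : (0 : ℝ) < n := by positivity
      rw [div_le_div_iff₀ (by positivity) (by positivity)]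
      linarith
  have h2 := h1.div (desc_lim 2 1 (2 * m)) (by positivity)
  have e : (1 / (2 ^ m * m.factorial : ℝ)) / ((2 : ℕ) : ℝ) ^ (2 * m) = 1 / (8 ^ m * m.factorial) := by
    have : (8 : ℝ) ^ m = 2 ^ m * 2 ^ (2 * m) := by rw [pow_mul, ← mul_pow]; norm_num
    rw [this]; push_cast; field_simp
  rw [e] at h2
  refine h2.congr' ?_
  filter_upwards [eventually_gt_atTop 0] with n hn
  have hn' : (n : ℝ) ≠ 0 := by positivity
  simp only [Pi.div_apply]
  field_simp

theorem desc_pos (n i : ℕ) (hi : i ≤ n) : 0 < (2 * n + 1).descFactorial (2 * i) := by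
  rw [Nat.pos_iff_ne_zero, Ne, Nat.descFactorial_eq_zero_iff_lt]; omega

theorem UU_bd (n m : ℕ) (hm : m ≤ n) :
    |(UU n m : ℝ) / ((2 * n + 1).descFactorial (2 * m) : ℝ)| ≤ 1 / m.factorial := by
  have hp : (0 : ℝ) < ((2 * n + 1).descFactorial (2 * m) : ℝ) := Nat.cast_pos.2 (desc_pos n m hm)
  rw [abs_of_nonneg (by positivity), div_le_div_iff₀ hp (by positivity)]
  have h : m.factorial * UU n m ≤ (2 * n + 1).descFactorial (2 * m) := by
    calc m.factorial * UU n m ≤ 4 ^ m * (m.factorial * UU n m) :=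
          Nat.le_mul_of_pos_left _ (by positivity)
      _ = 4 ^ m * m.factorial * UU n m := by ring
      _ ≤ _ := UU_bound n m
      _ ≤ _ := Nat.descFactorial_le _ (by omega)
  have h' : ((m.factorial * UU n m : ℕ) : ℝ) ≤ ((2 * n + 1).descFactorial (2 * m) : ℝ) :=
    Nat.cast_le.2 h
  push_cast at h'
  linarith

theorem choose_bd (n i : ℕ) (hi : i ≤ n) :
    |(n.choose i : ℝ) / ((2 * n + 1).descFactorial (2 * i) : ℝ)| ≤ 1 / i.factorial := by
  have hp : (0 : ℝ) < ((2 * n + 1).descFactorial (2 * i) : ℝ) := Nat.cast_pos.2 (desc_pos n i hi)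
  rw [abs_of_nonneg (by positivity), div_le_div_iff₀ hp (by positivity)]
  have h : i.factorial * n.choose i ≤ (2 * n + 1).descFactorial (2 * i) := by
    rw [← Nat.descFactorial_eq_factorial_mul_choose]
    calc _ ≤ (2 * n + 1).descFactorial i := Nat.descFactorial_le _ (by omega)
      _ ≤ _ := by
        rw [← Nat.descFactorial_mul_descFactorial (n := 2 * n + 1) (by omega : i ≤ 2 * i)]
        refine Nat.le_mul_of_pos_left _ ?_
        rw [Nat.pos_iff_ne_zero, Ne, Nat.descFactorial_eq_zero_iff_lt]; omega
  have h' : ((i.factorial * n.choose i : ℕ) : ℝ) ≤ ((2 * n + 1).descFactorial (2 * i) : ℝ) :=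
    Nat.cast_le.2 h
  push_cast at h'
  linarith

theorem choose_lim (i : ℕ) :
    Tendsto (fun n : ℕ => (n.choose i : ℝ) / ((2 * n + 1).descFactorial (2 * i) : ℝ)) atTop
      (𝓝 (if i = 0 then 1 else 0)) := by
  rcases Nat.eq_zero_or_pos i with rfl | hi
  · simp
  rw [if_neg (by omega)]
  have h1 := (desc_lim 2 1 (2 * i)).inv₀ (by positivity)
  have h2 : Tendsto (fun n : ℕ => ((n : ℝ) ^ i)⁻¹) atTop (𝓝 0) :=
    (((tendsto_pow_atTop (by omega)).comp tendsto_natCast_atTop_atTop)).inv_tendsto_atTop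
  have h3 := h2.mul h1
  rw [zero_mul] at h3
  refine squeeze_zero' (Eventually.of_forall fun n => by positivity) ?_ h3
  filter_upwards [eventually_ge_atTop (i + 1)] with n hn
  have hn' : (0 : ℝ) < n := by have : 0 < n := by omega
                               positivity
  have hp : (0 : ℝ) < ((2 * n + 1).descFactorial (2 * i) : ℝ) :=
    Nat.cast_pos.2 (desc_pos n i (by omega))
  have e : ((n : ℝ) ^ i)⁻¹ * (((2 * n + 1).descFactorial (2 * i) : ℝ) / (n : ℝ) ^ (2 * i))⁻¹ =
      (n : ℝ) ^ i / ((2 * n + 1).descFactorial (2 * i) : ℝ) := by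
    rw [two_mul i, pow_add]; field_simp
  rw [e]
  gcongr
  exact_mod_cast Nat.choose_le_pow n i

theorem gen_lim (W : ℕ → ℕ → ℝ) (ω : ℕ → ℝ) (N : ℕ → ℕ) (hN : Tendsto N atTop atTop)
    (hN' : ∀ n, N n ≤ n + 1) (x γ S : ℝ) (hS : 0 < S) (C : ℕ → ℝ)
    (hC : Tendsto (fun k => C k / ((2 * k + 1).factorial * S ^ k)) atTop (𝓝 γ))
    (hW : ∀ n i, i ≤ n → |W n i / ((2 * n + 1).descFactorial (2 * i) : ℝ)| ≤ 1 / i.factorial)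
    (hω : ∀ i, Tendsto (fun n => W n i / ((2 * n + 1).descFactorial (2 * i) : ℝ)) atTop (𝓝 (ω i))) :
    Tendsto (fun n => (∑ i ∈ Finset.range (N n), W n i * x ^ i * C (n - i)) /
      ((2 * n + 1).factorial * S ^ n)) atTop (𝓝 (∑' i, ω i * (x / S) ^ i * γ)) := by
  obtain ⟨K, hK⟩ := (Metric.isBounded_range_of_tendsto _ hC).exists_norm_le
  have hK' : ∀ k, |C k / ((2 * k + 1).factorial * S ^ k)| ≤ K := fun k => hK _ ⟨k, rfl⟩
  have hK0 : 0 ≤ K := (abs_nonneg _).trans (hK' 0)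
  have key := dct_range (fun n i => W n i / ((2 * n + 1).descFactorial (2 * i) : ℝ) * (x / S) ^ i *
      (C (n - i) / ((2 * (n - i) + 1).factorial * S ^ (n - i)))) (fun i => ω i * (x / S) ^ i * γ)
      (fun i => |x / S| ^ i / i.factorial * K) N hN ?_ ?_ ?_ ?_
  · refine key.congr fun n => ?_
    rw [Finset.sum_div]
    refine Finset.sum_congr rfl fun i hi => ?_
    have hi' : i ≤ n := by have := Finset.mem_range.1 hi; have := hN' n; omega
    have hp : (0 : ℝ) < ((2 * n + 1).descFactorial (2 * i) : ℝ) := Nat.cast_pos.2 (desc_pos n i hi')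
    have hf : ((2 * n + 1).factorial : ℝ) =
        (2 * (n - i) + 1).factorial * ((2 * n + 1).descFactorial (2 * i) : ℝ) := by
      rw [← Nat.factorial_mul_descFactorial (by omega : 2 * i ≤ 2 * n + 1)]
      have : 2 * n + 1 - 2 * i = 2 * (n - i) + 1 := by omega
      rw [this]; push_cast; ring
    have hs : S ^ n = S ^ (n - i) * S ^ i := by rw [← pow_add]; congr 1; omega
    rw [hf, hs, div_pow]
    have : ((2 * (n - i) + 1).factorial : ℝ) ≠ 0 := by positivity
    field_simp
  · exact (Real.summable_pow_div_factorial _).mul_right K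
  · intro i
    exact ((hω i).mul_const _).mul (hC.comp (tendsto_sub_atTop_nat i))
  · intro n i hi
    have hi' : i ≤ n := by have := hN' n; omega
    rw [abs_mul, abs_mul, abs_pow]
    have := hW n i hi'
    calc _ ≤ 1 / (i.factorial : ℝ) * |x / S| ^ i * K := by
          gcongr
          exact hK' _
      _ = _ := by ring
  · intro i; positivity

theorem stirling_lim : Tendsto (fun n : ℕ => ((2 * n + 1).factorial : ℝ) /
    ((n.factorial : ℝ) * n.factorial * 4 ^ n * Real.sqrt n)) atTop (𝓝 (2 / Real.sqrt Real.pi)) := by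
  have h := Stirling.tendsto_stirlingSeq_sqrt_pi
  have hpi : 0 < Real.sqrt Real.pi := Real.sqrt_pos.2 Real.pi_pos
  have h2 : Tendsto (fun n : ℕ => Stirling.stirlingSeq (2 * n)) atTop (𝓝 (Real.sqrt Real.pi)) :=
    h.comp (tendsto_id.const_mul_atTop' (by norm_num))
  have h3 := h2.div (h.mul h) (by positivity)
  have h4 : Tendsto (fun n : ℕ => (2 : ℝ) + (n : ℝ)⁻¹) atTop (𝓝 2) := by
    simpa using (tendsto_inv_atTop_nhds_zero_nat (𝕜 := ℝ)).const_add 2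
  have h5 := h4.mul h3
  have e : 2 * (Real.sqrt Real.pi / (Real.sqrt Real.pi * Real.sqrt Real.pi)) =
    2 / Real.sqrt Real.pi := by field_simp
  rw [e] at h5
  refine h5.congr' ?_
  filter_upwards [eventually_gt_atTop 0] with n hn
  have hn' : (0 : ℝ) < n := by positivity
  have hs : 0 < Real.sqrt n := Real.sqrt_pos.2 hn'
  have hss : Real.sqrt n ^ 2 = n := Real.sq_sqrt hn'.le
  simp only [Stirling.stirlingSeq, Pi.div_apply]
  have e1 : Real.sqrt (2 * ((2 * n : ℕ) : ℝ)) = 2 * Real.sqrt n := by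
    have : (2 * ((2 * n : ℕ) : ℝ)) = 2 ^ 2 * n := by push_cast; ring
    rw [this, Real.sqrt_mul (by positivity), Real.sqrt_sq (by norm_num)]
  have e2 : Real.sqrt (2 * (n : ℝ)) * Real.sqrt (2 * (n : ℝ)) = 2 * n :=
    Real.mul_self_sqrt (by positivity)
  have e3 : (((2 * n : ℕ) : ℝ) / Real.exp 1) ^ (2 * n) =
      4 ^ n * ((n / Real.exp 1) ^ n * (n / Real.exp 1) ^ n) := by
    push_cast
    rw [← mul_pow, ← mul_pow, pow_mul]; congr 1; ring
  have e4 : ((2 * n + 1).factorial : ℝ) = (2 * n + 1) * (2 * n).factorial := by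
    rw [Nat.factorial_succ]; push_cast; ring
  have hy : 0 < ((n : ℝ) / Real.exp 1) ^ n := by positivity
  rw [e1, e3, e4]
  generalize ((n : ℝ) / Real.exp 1) ^ n = y at *
  have e5 : ((n.factorial : ℝ) / (Real.sqrt (2 * (n : ℝ)) * y)) *
      ((n.factorial : ℝ) / (Real.sqrt (2 * (n : ℝ)) * y)) =
      n.factorial * n.factorial / (2 * n * (y * y)) := by
    rw [div_mul_div_comm]; congr 1
    rw [mul_mul_mul_comm, e2]
  rw [e5]
  have : (n.factorial : ℝ) ≠ 0 := by positivity
  field_simp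

theorem stirling1_eq (n : ℕ) : ∀ m, m ≤ n → stirling1 n (n - m) = UU n m := by
  have hdeg : ∀ n : ℕ, ∀ j, n < j → stirling1 n j = 0 := by
    intro n
    induction n with
    | zero => intro j hj; simp [stirling1, Polynomial.coeff_one]; omega
    | succ n ih =>
      intro j hj
      obtain ⟨j, rfl⟩ := Nat.exists_eq_add_of_le' (show 1 ≤ j by omega)
      have h1 := ih j (by omega)
      have h2 := ih (j + 1) (by omega)
      unfold stirling1 at *
      rw [Finset.prod_range_succ, mul_add, Polynomial.coeff_add, Polynomial.coeff_mul_X,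
        Polynomial.coeff_mul_C, h1, h2]
      simp
  have hsucc : ∀ n j : ℕ, stirling1 (n + 1) (j + 1) = stirling1 n j + n * stirling1 n (j + 1) := by
    intro n j
    unfold stirling1
    rw [Finset.prod_range_succ, mul_add, Polynomial.coeff_add, Polynomial.coeff_mul_X,
        Polynomial.coeff_mul_C]
    ring
  have hzero : ∀ n : ℕ, stirling1 (n + 1) 0 = n * stirling1 n 0 := by
    intro n
    unfold stirling1
    rw [Finset.prod_range_succ, mul_add, Polynomial.coeff_add, Polynomial.coeff_mul_X_zero,
        Polynomial.coeff_mul_C]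
    ring
  induction n with
  | zero => intro m hm; obtain rfl : m = 0 := by omega
            simp [stirling1, UU]
  | succ n ih =>
    intro m hm
    cases m with
    | zero =>
      rw [Nat.sub_zero, hsucc, hdeg n (n + 1) (by omega), UU]
      simpa using ih 0 (by omega)
    | succ m =>
      rw [UU, Nat.add_sub_add_right]
      rcases Nat.lt_or_ge m n with h | h
      · have e : n - m = (n - (m + 1)) + 1 := by omega
        have := ih m (by omega)
        have h2 := ih (m + 1) (by omega)
        rw [e] at this ⊢
        rw [hsucc, this, h2]; push_cast; ring
      · obtain rfl : m = n := by omega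
        have := ih m le_rfl
        rw [Nat.sub_self] at this ⊢
        rw [hzero, this, UU_gt m (m + 1) (by omega)]
        push_cast; ring

theorem Cf_lim (M : ℕ) (hM : 0 < M) (f : ℤ → ℝ) :
    Tendsto (fun k => Cf M f 1 k / ((2 * k + 1).factorial * (((M : ℝ) / (2 * Real.pi)) ^ 2) ^ k)) atTop
      (𝓝 (-(M * 2 / (2 * Real.pi) ^ 2) *
        ∑ m ∈ Finset.Icc 1 M, f m * Real.cos (2 * Real.pi * (m / M)))) := by
  have hM' : (0 : ℝ) < M := by positivity
  set G : ℕ → ℝ := fun n => ∑ m ∈ Finset.Icc 1 M, f m * Real.cos (2 * Real.pi * n * (m / M)) with hG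
  have hGb : ∀ n, |G n| ≤ ∑ m ∈ Finset.Icc 1 M, |f m| := by
    intro n
    refine (Finset.abs_sum_le_sum_abs _ _).trans (Finset.sum_le_sum fun m _ => ?_)
    rw [abs_mul]
    exact mul_le_of_le_one_right (abs_nonneg _) (Real.abs_cos_le_one _)
  have hsum : ∀ k : ℕ, HasSum (fun n : ℕ => 1 / (n : ℝ) ^ (2 * (k + 1)) * G n)
      (∑ m ∈ Finset.Icc 1 M, f m * ((-1 : ℝ) ^ (k + 1 + 1) * (2 * Real.pi) ^ (2 * (k + 1)) / 2 /
        (2 * (k + 1)).factorial *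
        (((Polynomial.bernoulli (2 * k + 1 + 1)).eval ((m : ℚ) / (M : ℚ)) : ℚ) : ℝ))) := by
    intro k
    have := hasSum_sum (L := SummationFilter.unconditional ℕ) (s := Finset.Icc 1 M) (f := fun (m : ℕ) (n : ℕ) =>
      f m * (1 / (n : ℝ) ^ (2 * (k + 1)) * Real.cos (2 * Real.pi * n * ((m : ℝ) / M))))
      (a := fun m => f m * ((-1 : ℝ) ^ (k + 1 + 1) * (2 * Real.pi) ^ (2 * (k + 1)) / 2 /
        (2 * (k + 1)).factorial *
        (((Polynomial.bernoulli (2 * k + 1 + 1)).eval ((m : ℚ) / (M : ℚ)) : ℚ) : ℝ))) ?_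
    · refine this.congr_fun fun n => ?_
      rw [hG, Finset.mul_sum]
      exact Finset.sum_congr rfl fun m _ => by ring
    · intro m hm
      refine HasSum.mul_left _ ?_
      have hm2 := (Finset.mem_Icc.1 hm).2
      have hx : ((m : ℝ) / M) ∈ Set.Icc (0 : ℝ) 1 :=
        ⟨by positivity, (div_le_one hM').2 (by exact_mod_cast hm2)⟩
      have h := hasSum_one_div_nat_pow_mul_cos (k := k + 1) (by omega) hx
      have e : (Polynomial.map (algebraMap ℚ ℝ) (Polynomial.bernoulli (2 * (k + 1)))).eval
          ((m : ℝ) / M) =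
          (((Polynomial.bernoulli (2 * k + 1 + 1)).eval ((m : ℚ) / (M : ℚ)) : ℚ) : ℝ) := by
        have e1 : ((m : ℝ) / M) = algebraMap ℚ ℝ ((m : ℚ) / M) := by simp
        rw [e1, Polynomial.eval_map, Polynomial.eval₂_at_apply]
        rfl
      rw [e] at h
      exact h
  have hT : Tendsto (fun k : ℕ => ∑' n : ℕ, 1 / (n : ℝ) ^ (2 * (k + 1)) * G n) atTop (𝓝 (G 1)) := by
    have h0 : ∑' n : ℕ, (if n = 1 then G 1 else 0) = G 1 := by simp
    rw [← h0]
    refine tendsto_tsum_of_dominated_convergence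
      (bound := fun n : ℕ => 1 / (n : ℝ) ^ 2 * ∑ m ∈ Finset.Icc 1 M, |f m|) ?_ ?_ ?_
    · exact (Real.summable_one_div_nat_pow.2 (by norm_num)).mul_right _
    · intro n
      rcases Nat.lt_trichotomy n 1 with h | h | h
      · obtain rfl : n = 0 := by omega
        simp
      · subst h; simp
      · rw [if_neg (by omega)]
        have hn : (1 : ℝ) < (n : ℝ) ^ 2 := by
          have : (1 : ℝ) < n := by exact_mod_cast h
          nlinarith
        have h1 : Tendsto (fun k : ℕ => (((n : ℝ) ^ 2) ^ (k + 1))⁻¹) atTop (𝓝 0) :=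
          (((tendsto_pow_atTop_atTop_of_one_lt hn).comp (tendsto_add_atTop_nat 1))).inv_tendsto_atTop
        have h2 := h1.mul_const (G n)
        rw [zero_mul] at h2
        refine h2.congr fun k => ?_
        rw [pow_mul]; simp
    · refine Eventually.of_forall fun k n => ?_
      rw [Real.norm_eq_abs, abs_mul]
      refine mul_le_mul ?_ (hGb n) (abs_nonneg _) (by positivity)
      rw [abs_of_nonneg (by positivity)]
      rcases Nat.eq_zero_or_pos n with rfl | h
      · simp
      · have : (1 : ℝ) ≤ n := by exact_mod_cast h
        exact one_div_le_one_div_of_le (by positivity) (pow_le_pow_right₀ this (by omega))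
  have h3 := hT.const_mul (-(M * 2 / (2 * Real.pi) ^ 2))
  have eG : G 1 = ∑ m ∈ Finset.Icc 1 M, f m * Real.cos (2 * Real.pi * (m / M)) := by
    simp [hG]
  rw [eG] at h3
  refine h3.congr fun k => ?_
  rw [(hsum k).tsum_eq]
  unfold Cf
  have e1 : ∀ m : ℕ, f m * ((-1 : ℝ) ^ (k + 1 + 1) * (2 * Real.pi) ^ (2 * (k + 1)) / 2 /
        (2 * (k + 1)).factorial *
        (((Polynomial.bernoulli (2 * k + 1 + 1)).eval ((m : ℚ) / (M : ℚ)) : ℚ) : ℝ)) =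
      ((-1 : ℝ) ^ (k + 1 + 1) * (2 * Real.pi) ^ (2 * (k + 1)) / 2 /
        (2 * (k + 1)).factorial) * (f m *
        (((Polynomial.bernoulli (2 * k + 1 + 1)).eval ((m : ℚ) / (M : ℚ)) : ℚ) : ℝ)) := by
    intro m; ring
  simp only [e1]
  rw [← Finset.mul_sum]
  generalize (∑ m ∈ Finset.Icc 1 M, f m *
        (((Polynomial.bernoulli (2 * k + 1 + 1)).eval ((m : ℚ) / (M : ℚ)) : ℚ) : ℝ)) = Z
  have e2 : ((2 * (k + 1)).factorial : ℝ) = (2 * k + 1 + 1) * (2 * k + 1).factorial := by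
    have : 2 * (k + 1) = 2 * k + 1 + 1 := by ring
    rw [this, Nat.factorial_succ]; push_cast; ring
  rw [e2, ← pow_mul, div_pow, mul_add 2 k 1, pow_add (2 * Real.pi), pow_add (M : ℝ),
    pow_succ (-1 : ℝ) (k + 1)]
  have hp := Real.pi_pos
  have hf : ((2 * k + 1).factorial : ℝ) ≠ 0 := by positivity
  have hk : (2 * (k : ℝ) + 1 + 1) ≠ 0 := by positivity
  have hk' : (2 * (k : ℝ) + ((1 : ℕ) : ℝ) + 1) ≠ 0 := by positivity
  push_cast at hk' ⊢
  field_simp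

theorem chi_sum (t : ℕ) (ht : 1 ≤ t) (g : ℕ → ℝ) :
    ∑ m ∈ Finset.Icc (1 : ℕ) (3 * 2 ^ (t + 1)), chiT t m * g m =
      (1 / 2) * (g (2 * 2 ^ t + 3) + g (4 * 2 ^ t - 3) - g (2 * 2 ^ t - 3) - g (4 * 2 ^ t + 3)) := by
  obtain ⟨s, rfl⟩ := Nat.exists_eq_add_of_le' ht
  have hK : 1 ≤ 2 ^ s := Nat.one_le_two_pow
  have e1 : ∀ j, (2 : ℕ) ^ (s + j) = 2 ^ s * 2 ^ j := fun j => pow_add _ _ _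
  have e2 : ∀ j, (2 : ℤ) ^ (s + j) = 2 ^ s * 2 ^ j := fun j => pow_add _ _ _
  have key : ∀ m ∈ Finset.Icc (1 : ℕ) (3 * 2 ^ (s + 1 + 1)), chiT (s + 1) m * g m =
      (if m = 2 * 2 ^ (s + 1) + 3 then (1 / 2) * g m else 0) +
      (if m = 4 * 2 ^ (s + 1) - 3 then (1 / 2) * g m else 0) +
      (if m = 2 * 2 ^ (s + 1) - 3 then -(1 / 2) * g m else 0) +
      (if m = 4 * 2 ^ (s + 1) + 3 then -(1 / 2) * g m else 0) := by
    intro m hm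
    rw [Finset.mem_Icc] at hm
    obtain ⟨hm1, hm2⟩ := hm
    unfold chiT
    simp only [add_assoc, e1, e2] at hm2 ⊢
    have hz : ((2 : ℤ) ^ s) = ((2 ^ s : ℕ) : ℤ) := by push_cast; rfl
    rw [hz]
    generalize (2 ^ s : ℕ) = K at *
    norm_num at hm2 ⊢
    have r1 : ((K : ℤ) * 4 - 3) % (3 * ((K : ℤ) * 4)) = K * 4 - 3 := Int.emod_eq_of_lt (by omega) (by omega)
    have r2 : ((K : ℤ) * 8 + 3) % (3 * ((K : ℤ) * 4)) = K * 8 + 3 := Int.emod_eq_of_lt (by omega) (by omega)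
    have r3 : ((K : ℤ) * 4 + 3) % (3 * ((K : ℤ) * 4)) = K * 4 + 3 := Int.emod_eq_of_lt (by omega) (by omega)
    have r4 : ((K : ℤ) * 8 - 3) % (3 * ((K : ℤ) * 4)) = K * 8 - 3 := Int.emod_eq_of_lt (by omega) (by omega)
    rw [r1, r2, r3, r4]
    rcases Nat.lt_or_ge m (3 * (K * 4)) with h | h
    · have r5 : (m : ℤ) % (3 * ((K : ℤ) * 4)) = m := Int.emod_eq_of_lt (by omega) (by omega)
      rw [r5]
      have c1 : ((m : ℤ) = K * 4 - 3) ↔ m = 2 * (K * 2) - 3 := by omega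
      have c2 : ((m : ℤ) = K * 8 + 3) ↔ m = 4 * (K * 2) + 3 := by omega
      have c3 : ((m : ℤ) = K * 4 + 3) ↔ m = 2 * (K * 2) + 3 := by omega
      have c4 : ((m : ℤ) = K * 8 - 3) ↔ m = 4 * (K * 2) - 3 := by omega
      simp only [c1, c2, c3, c4]
      split_ifs <;> first | omega | ring
    · have r5 : (m : ℤ) % (3 * ((K : ℤ) * 4)) = 0 := by
        have : (m : ℤ) = 3 * ((K : ℤ) * 4) := by omega
        rw [this, Int.emod_self]
      rw [r5]
      split_ifs <;> first | omega | ring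
  rw [Finset.sum_congr rfl key]
  simp only [Finset.sum_add_distrib, Finset.sum_ite_eq', Finset.mem_Icc]
  have p1 : (2 : ℕ) ^ (s + 1) = 2 ^ s * 2 := e1 1
  have p2 : (2 : ℕ) ^ (s + 1 + 1) = 2 ^ s * 4 := e1 2
  rw [p1, p2]
  rw [if_pos (by omega), if_pos (by omega), if_pos (by omega), if_pos (by omega)]
  ring

theorem chi_cos (t : ℕ) (ht : 1 ≤ t) :
    ∑ m ∈ Finset.Icc (1 : ℕ) (3 * 2 ^ (t + 1)), chiT t m *
      Real.cos (2 * Real.pi * (m / ((3 * 2 ^ (t + 1) : ℕ) : ℝ))) =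
    -(Real.sqrt 3 * Real.sin (Real.pi / 2 ^ t)) := by
  rw [chi_sum t ht (fun m => Real.cos (2 * Real.pi * (m / ((3 * 2 ^ (t + 1) : ℕ) : ℝ))))]
  have h2 : 2 ≤ 2 ^ t := by
    calc 2 = 2 ^ 1 := rfl
      _ ≤ 2 ^ t := Nat.pow_le_pow_right (by norm_num) ht
  have q1 : ((4 * 2 ^ t - 3 : ℕ) : ℝ) = 4 * 2 ^ t - 3 := by
    rw [Nat.cast_sub (by omega)]; push_cast; ring
  have q2 : ((2 * 2 ^ t - 3 : ℕ) : ℝ) = 2 * 2 ^ t - 3 := by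
    rw [Nat.cast_sub (by omega)]; push_cast; ring
  have hN : (0 : ℝ) < 2 ^ t := by positivity
  simp only [q1, q2]
  push_cast
  rw [pow_succ]
  generalize (2 : ℝ) ^ t = N at *
  have a1 : 2 * Real.pi * ((2 * N + 3) / (3 * (N * 2))) = 2 * Real.pi / 3 + Real.pi / N := by
    field_simp; try ring
  have a2 : 2 * Real.pi * ((4 * N - 3) / (3 * (N * 2))) =
      2 * Real.pi - (2 * Real.pi / 3 + Real.pi / N) := by
    field_simp; try ring
  have a3 : 2 * Real.pi * ((2 * N - 3) / (3 * (N * 2))) = 2 * Real.pi / 3 - Real.pi / N := by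
    field_simp; try ring
  have a4 : 2 * Real.pi * ((4 * N + 3) / (3 * (N * 2))) =
      2 * Real.pi - (2 * Real.pi / 3 - Real.pi / N) := by
    field_simp; try ring
  rw [a1, a2, a3, a4, Real.cos_two_pi_sub, Real.cos_two_pi_sub, Real.cos_add, Real.cos_sub]
  have a5 : Real.sin (2 * Real.pi / 3) = Real.sqrt 3 / 2 := by
    rw [← Real.sin_pi_div_three, ← Real.sin_pi_sub]; congr 1; ring
  rw [a5]; ring

theorem Df_lim (M : ℕ) (f : ℤ → ℝ) (a b : ℕ) (hb : 0 < b) (R γ : ℝ) (hR : 0 < R)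
    (h : Tendsto (fun k => Cf M f 1 k / ((2 * k + 1).factorial * R ^ k)) atTop (𝓝 γ)) :
    Tendsto (fun k => Df M f 1 a b k / ((2 * k + 1).factorial * (R / b) ^ k)) atTop (𝓝 γ) := by
  have key := gen_lim (fun n i => (n.choose i : ℝ)) (fun i => if i = 0 then 1 else 0)
    (fun n => n + 1) (tendsto_add_atTop_nat 1) (fun n => le_rfl) a γ R hR (Cf M f 1) h choose_bd
    choose_lim
  have e : ∑' i : ℕ, (if i = 0 then (1 : ℝ) else 0) * ((a : ℝ) / R) ^ i * γ = γ := by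
    rw [tsum_eq_single 0]
    · simp
    · intro i hi; simp [hi]
  rw [e] at key
  refine key.congr fun n => ?_
  unfold Df
  have hb' : (0 : ℝ) < b := by positivity
  rw [← Finset.sum_range_reflect]
  have e2 : ∑ j ∈ Finset.range (n + 1), ((n.choose (n + 1 - 1 - j) : ℕ) : ℝ) *
      (a : ℝ) ^ (n + 1 - 1 - j) * Cf M f 1 (n - (n + 1 - 1 - j)) =
      ∑ k ∈ Finset.range (n + 1), (n.choose k : ℝ) * (a : ℝ) ^ (n - k) * Cf M f 1 k := by
    refine Finset.sum_congr rfl fun j hj => ?_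
    have hj' : j ≤ n := by have := Finset.mem_range.1 hj; omega
    rw [Nat.add_sub_cancel, Nat.choose_symm hj', Nat.sub_sub_self hj']
  rw [e2, div_pow]
  field_simp

theorem xif_lim (M : ℕ) (f : ℤ → ℝ) (a b : ℕ) (S γ : ℝ) (hS : 0 < S)
    (h : Tendsto (fun k => Df M f 1 a b k / ((2 * k + 1).factorial * S ^ k)) atTop (𝓝 γ)) :
    Tendsto (fun n => xif M f 1 a b n * n.factorial / ((2 * n + 1).factorial * S ^ n)) atTop
      (𝓝 (γ * Real.exp (1 / (8 * S)))) := by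
  have key := gen_lim (fun n i => (UU n i : ℝ)) (fun i => 1 / (8 ^ i * i.factorial))
    (fun n => n) tendsto_id (fun n => Nat.le_succ n) 1 γ S hS (Df M f 1 a b) h UU_bd
    UU_lim
  have e : ∑' i : ℕ, (1 / (8 ^ i * i.factorial) : ℝ) * (1 / S) ^ i * γ =
      γ * Real.exp (1 / (8 * S)) := by
    rw [Real.exp_eq_exp_ℝ, NormedSpace.exp_eq_tsum_div, tsum_mul_right, mul_comm γ]
    congr 1
    refine tsum_congr fun i => ?_
    rw [div_pow, div_pow, mul_pow]
    field_simp
  rw [e] at key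
  refine key.congr' ?_
  filter_upwards [eventually_gt_atTop 0] with n hn
  obtain ⟨n, rfl⟩ := Nat.exists_eq_add_of_le' hn
  rw [xif]
  have e2 : ∑ i ∈ Finset.range (n + 1), (UU (n + 1) i : ℝ) * 1 ^ i * Df M f 1 a b (n + 1 - i) =
      ∑ m ∈ Finset.range (n + 1), stirling1 (n + 1) (n + 1 - m) * Df M f 1 a b (n + 1 - m) := by
    refine Finset.sum_congr rfl fun m hm => ?_
    rw [stirling1_eq (n + 1) m (by have := Finset.mem_range.1 hm; omega)]
    simp
  rw [e2]
  have : ((n + 1).factorial : ℝ) ≠ 0 := by positivity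
  congr 1
  field_simp

end FishburnAux

/-- The generalized Fishburn numbers `ξ_t(n)` (the coefficients of
`𝓕_t(1−q)`, obtained from the construction with `f = χ_t`, `M = 3·2^(t+1)`, `ν = 1`,
`a = (2^(t+1)−3)²`, `b = 3·2^(t+2)`) satisfy
`ξ_t(n) ~ (sin(π/2^t)/(2^t √(3π))) (3·2^t/π)^(2n+2) 2^(2n+1) n! √n / (3·2^(t+2))^n
          · e^(π²/(3·2^(t+1)))` as `n → ∞`. -/
theorem generalized_fishburn_asymptotic (t : ℕ) (ht : 1 ≤ t) :
    Filter.Tendsto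
      (fun n : ℕ =>
        xif (3 * 2 ^ (t + 1)) (chiT t) 1 ((2 ^ (t + 1) - 3) ^ 2) (3 * 2 ^ (t + 2)) n /
          (Real.sin (Real.pi / 2 ^ t) / (2 ^ t * Real.sqrt (3 * Real.pi)) *
            ((3 * 2 ^ t : ℝ) / Real.pi) ^ (2 * n + 2) * 2 ^ (2 * n + 1) *
            (n.factorial : ℝ) * Real.sqrt n / (3 * 2 ^ (t + 2) : ℝ) ^ n *
            Real.exp (Real.pi ^ 2 / (3 * 2 ^ (t + 1)))))
      Filter.atTop (nhds 1) := by
  have hN : (0 : ℝ) < 2 ^ t := by positivity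
  have hp := Real.pi_pos
  have h1 := Cf_lim (3 * 2 ^ (t + 1)) (by positivity) (chiT t)
  rw [chi_cos t ht] at h1
  have h2 := Df_lim _ _ ((2 ^ (t + 1) - 3) ^ 2) (3 * 2 ^ (t + 2)) (by positivity) _ _
    (by positivity) h1
  have h3 := xif_lim _ _ _ _ _ _ (by positivity) h2
  have h4 := h3.mul stirling_lim
  have hsin : 0 < Real.sin (Real.pi / 2 ^ t) := by
    apply Real.sin_pos_of_pos_of_lt_pi (by positivity)
    have h2 : (2 : ℝ) ≤ 2 ^ t := by
      calc (2 : ℝ) = 2 ^ 1 := by norm_num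
        _ ≤ 2 ^ t := pow_le_pow_right₀ (by norm_num) ht
    rw [div_lt_iff₀ hN]
    nlinarith
  set c : ℝ := Real.sin (Real.pi / 2 ^ t) / (2 ^ t * Real.sqrt (3 * Real.pi)) *
    ((3 * 2 ^ t : ℝ) / Real.pi) ^ 2 * 2 * Real.exp (Real.pi ^ 2 / (3 * 2 ^ (t + 1))) with hc
  have hc0 : 0 < c := by positivity
  have h5 := h4.div_const c
  have e : -(((3 * 2 ^ (t + 1) : ℕ) : ℝ) * 2 / (2 * Real.pi) ^ 2) *
      -(Real.sqrt 3 * Real.sin (Real.pi / 2 ^ t)) *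
      Real.exp (1 / (8 * ((((3 * 2 ^ (t + 1) : ℕ) : ℝ) / (2 * Real.pi)) ^ 2 /
        ((3 * 2 ^ (t + 2) : ℕ) : ℝ)))) * (2 / Real.sqrt Real.pi) / c = 1 := by
    have e1 : 1 / (8 * ((((3 * 2 ^ (t + 1) : ℕ) : ℝ) / (2 * Real.pi)) ^ 2 /
        ((3 * 2 ^ (t + 2) : ℕ) : ℝ))) = Real.pi ^ 2 / (3 * 2 ^ (t + 1)) := by
      push_cast
      rw [pow_add, pow_add]
      field_simp
      norm_num
    have hs3 : Real.sqrt 3 * Real.sqrt 3 = 3 := Real.mul_self_sqrt (by norm_num)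
    have hs3' : 0 < Real.sqrt 3 := by positivity
    rw [e1, div_eq_one_iff_eq hc0.ne', hc, Real.sqrt_mul (by norm_num)]
    push_cast
    rw [pow_add]
    have hx := Real.exp_pos (Real.pi ^ 2 / (3 * (2 ^ t * 2 ^ 1)))
    field_simp
    rw [Real.sq_sqrt (by norm_num)]
    try norm_num
  rw [e] at h5
  refine h5.congr' ?_
  filter_upwards [Filter.eventually_gt_atTop 0] with n hn
  have hn' : (0 : ℝ) < n := by positivity
  have hs : 0 < Real.sqrt n := Real.sqrt_pos.2 hn'
  have hf : (0 : ℝ) < n.factorial := by positivity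
  have hf2 : (0 : ℝ) < (2 * n + 1).factorial := by positivity
  have e3 : Real.sin (Real.pi / 2 ^ t) / (2 ^ t * Real.sqrt (3 * Real.pi)) *
            ((3 * 2 ^ t : ℝ) / Real.pi) ^ (2 * n + 2) * 2 ^ (2 * n + 1) *
            (n.factorial : ℝ) * Real.sqrt n / (3 * 2 ^ (t + 2) : ℝ) ^ n *
            Real.exp (Real.pi ^ 2 / (3 * 2 ^ (t + 1))) =
      c * ((((3 * 2 ^ (t + 1) : ℕ) : ℝ) / (2 * Real.pi)) ^ 2 /
        ((3 * 2 ^ (t + 2) : ℕ) : ℝ)) ^ n * 4 ^ n * n.factorial * Real.sqrt n := by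
    have e4 : ((3 * 2 ^ (t + 1) : ℕ) : ℝ) / (2 * Real.pi) = 3 * 2 ^ t / Real.pi := by
      push_cast; rw [pow_succ]; field_simp
    rw [e4, hc, pow_add _ (2 * n) 2, pow_add _ (2 * n) 1, pow_mul, pow_mul, div_pow (_ ^ 2)]
    push_cast
    ring
  rw [e3]
  have hS : (0 : ℝ) < ((((3 * 2 ^ (t + 1) : ℕ) : ℝ) / (2 * Real.pi)) ^ 2 /
        ((3 * 2 ^ (t + 2) : ℕ) : ℝ)) ^ n := by positivity
  generalize ((((3 * 2 ^ (t + 1) : ℕ) : ℝ) / (2 * Real.pi)) ^ 2 /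
        ((3 * 2 ^ (t + 2) : ℕ) : ℝ)) ^ n = Q at *
  generalize xif (3 * 2 ^ (t + 1)) (chiT t) 1 ((2 ^ (t + 1) - 3) ^ 2) (3 * 2 ^ (t + 2)) n = X
  clear_value c
  field_simp
end

section
/- Fix an integer k ≥ 1 and apply the construction in the context with f = χ_k, M = 4k+2, ν = 0, a = k², and b = 2k+1, obtaining the sequence ξ(n). Then ξ(n) / [ cos(π/(2(2k+1))) · 2^(2n+2) · n! / (π^(3/2) · √n) · ((2k+1)/π²)^n · e^(π²/(8(2k+1))) ] → 1 as n → ∞. -/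
/-- The odd periodic function `χ_k` of period `4k+2` with `χ_k(n) = 1` for
`n ≡ k, k+1 (mod 4k+2)`, `χ_k(n) = −1` for `n ≡ −k, −k−1 (mod 4k+2)`, and `0` otherwise. -/
noncomputable def chiK (k : ℕ) (n : ℤ) : ℝ :=
  if n % (4 * k + 2) = (k : ℤ) % (4 * k + 2) ∨
      n % (4 * k + 2) = ((k : ℤ) + 1) % (4 * k + 2) then 1
  else if n % (4 * k + 2) = (-(k : ℤ)) % (4 * k + 2) ∨
      n % (4 * k + 2) = (-(k : ℤ) - 1) % (4 * k + 2) then -1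
  else 0

open Filter Topology

/-- reversed unsigned Stirling numbers of the first kind -/
noncomputable def cst : ℕ → ℕ → ℝ
  | 0, 0 => 1
  | 0, _ + 1 => 0
  | n + 1, 0 => cst n 0
  | n + 1, m + 1 => cst n (m + 1) + n * cst n m

lemma cst_zero_of_lt (n : ℕ) : ∀ m, n < m → cst n m = 0 := by
  induction n with
  | zero => intro m hm; obtain ⟨m, rfl⟩ := Nat.exists_eq_succ_of_ne_zero hm.ne'; simp [cst]
  | succ n ih =>
    intro m hm
    obtain ⟨m, rfl⟩ := Nat.exists_eq_succ_of_ne_zero (by omega : m ≠ 0)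
    simp [cst, ih (m+1) (by omega), ih m (by omega)]

lemma cst_zero_right (n : ℕ) : cst n 0 = 1 := by
  induction n with
  | zero => simp [cst]
  | succ n ih => simp [cst, ih]

lemma cst_nonneg (n : ℕ) : ∀ m, 0 ≤ cst n m := by
  induction n with
  | zero => intro m; cases m <;> simp [cst]
  | succ n ih =>
    intro m
    cases m with
    | zero => simpa [cst] using ih 0
    | succ m => have := ih m; have := ih (m+1); simp only [cst]; positivity

lemma cst_upper (n : ℕ) : ∀ m, cst n m * (2 ^ m * m.factorial) ≤ (n : ℝ) ^ (2 * m) := by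
  induction n with
  | zero => intro m; cases m <;> simp [cst]
  | succ n ih =>
    intro m
    cases m with
    | zero => simp [cst_zero_right]
    | succ m =>
      have h1 := ih m
      have h2 := ih (m+1)
      simp only [cst]
      have hb : (n:ℝ)^(2*(m+1)) + (2*m+2) * n * (n:ℝ)^(2*m) ≤ ((n:ℝ)+1)^(2*(m+1)) := by
        have := add_pow (n:ℝ) 1 (2*(m+1))
        rw [this, Finset.sum_range_succ, show 2*(m+1) = (2*m+1)+1 by ring, Finset.sum_range_succ]
        have : 0 ≤ ∑ x ∈ Finset.range (2 * m + 1), (n:ℝ) ^ x * 1 ^ (2 * m + 1 + 1 - x) * ((2 * m + 1 + 1).choose x : ℝ) :=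
          Finset.sum_nonneg (fun i _ => by positivity)
        have e : ((2*m+1+1).choose (2*m+1) : ℝ) = 2*m+2 := by
          rw [Nat.choose_succ_self_right]; push_cast; ring
        rw [e]
        simp
        simp only [one_pow, mul_one] at this
        have e3 : (n:ℝ)^(2*m+1) * (2*m+2) = (2*m+2) * n * (n:ℝ)^(2*m) := by ring
        linarith
      push_cast [Nat.factorial_succ, pow_succ 2 m] at *
      have h3 := mul_le_mul_of_nonneg_left h1 (by positivity : (0:ℝ) ≤ (2*m+2)*n)
      have e4 : (cst n (m + 1) + n * cst n m) * (2 ^ (m + 1) * (((m:ℝ) + 1) * m.factorial)) =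
          cst n (m + 1) * (2 ^ (m + 1) * (((m:ℝ) + 1) * m.factorial)) +
          (2 * m + 2) * n * (cst n m * (2 ^ m * m.factorial)) := by ring
      rw [e4]
      linarith

lemma cst_lower (n : ℕ) : ∀ m, (((n - m : ℕ) : ℝ)) ^ (2 * m) ≤ cst n m * (2 ^ m * m.factorial) := by
  induction n with
  | zero => intro m; cases m <;> simp [cst]
  | succ n ih =>
    intro m
    cases m with
    | zero => simp [cst_zero_right]
    | succ m =>
      have h1 := ih m
      have h2 := ih (m+1)
      simp only [cst]
      rw [Nat.succ_sub_succ]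
      have hb : (((n - m : ℕ) : ℝ))^(2*(m+1)) ≤ (((n - (m+1) : ℕ) : ℝ))^(2*(m+1)) + (2*m+2) * n * (((n - m : ℕ) : ℝ))^(2*m) := by
        rcases Nat.eq_zero_or_pos (n-m) with h | h
        · rw [h]; simp; positivity
        · obtain ⟨x, hx⟩ := Nat.exists_eq_succ_of_ne_zero h.ne'
          have hx' : n - (m+1) = x := by omega
          rw [hx, hx']
          have hn : (x:ℝ) + 1 ≤ n := by exact_mod_cast (by omega : x + 1 ≤ n)
          have hB := one_add_mul_le_pow (a := -1/((x:ℝ)+1)) (by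
            rw [le_div_iff₀ (by positivity)]; nlinarith [(Nat.cast_nonneg x : (0:ℝ) ≤ x)]) (2*(m+1))
          have hx1 : (0:ℝ) < x+1 := by positivity
          have e1 : 1 + -1/((x:ℝ)+1) = x/(x+1) := by field_simp; ring
          rw [e1, div_pow, le_div_iff₀ (by positivity)] at hB
          have e2 : (1 + ((2*(m+1) : ℕ):ℝ) * (-1/((x:ℝ)+1))) * ((x:ℝ)+1)^(2*(m+1)) = ((x:ℝ)+1)^(2*(m+1)) - (2*m+2) * ((x:ℝ)+1) * ((x:ℝ)+1)^(2*m) := by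
            push_cast
            field_simp
            ring
          rw [e2] at hB
          have : (2*m+2) * ((x:ℝ)+1) * ((x:ℝ)+1)^(2*m) ≤ (2*m+2) * (n:ℝ) * ((x:ℝ)+1)^(2*m) := by gcongr
          push_cast
          linarith
      push_cast [Nat.factorial_succ, pow_succ 2 m] at *
      have h3 := mul_le_mul_of_nonneg_left h1 (by positivity : (0:ℝ) ≤ (2*m+2)*n)
      have e4 : (cst n (m + 1) + n * cst n m) * (2 ^ (m + 1) * (((m:ℝ) + 1) * m.factorial)) =
          cst n (m + 1) * (2 ^ (m + 1) * (((m:ℝ) + 1) * m.factorial)) +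
          (2 * m + 2) * n * (cst n m * (2 ^ m * m.factorial)) := by ring
      rw [e4]
      linarith

lemma sub_div_tendsto (p : ℕ) : Tendsto (fun n : ℕ => ((n - p : ℕ) : ℝ) / n) atTop (𝓝 1) := by
  rw [← tendsto_add_atTop_iff_nat p]
  have := tendsto_natCast_div_add_atTop (p : ℝ)
  refine this.congr (fun n => ?_)
  simp

lemma cst_tendsto (m : ℕ) : Tendsto (fun n : ℕ => cst n m / (n : ℝ) ^ (2 * m)) atTop
    (𝓝 (1 / (2 ^ m * m.factorial))) := by
  have h1 : Tendsto (fun n : ℕ => (((n - m : ℕ) : ℝ) / n) ^ (2*m) * (1 / (2 ^ m * m.factorial) : ℝ)) atTop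
    (𝓝 (1 / (2 ^ m * m.factorial))) := by
    simpa using ((sub_div_tendsto m).pow (2*m)).mul_const (1 / (2 ^ m * m.factorial) : ℝ)
  refine tendsto_of_tendsto_of_tendsto_of_le_of_le' h1 tendsto_const_nhds ?_ ?_
  · filter_upwards [eventually_gt_atTop 0] with n hn
    have hn' : (0:ℝ) < n := by exact_mod_cast hn
    have := cst_lower n m
    rw [div_pow, div_mul_div_comm, div_le_div_iff₀ (by positivity) (by positivity)]
    nlinarith [mul_le_mul_of_nonneg_right this (by positivity : (0:ℝ) ≤ n^(2*m))]
  · filter_upwards [eventually_gt_atTop 0] with n hn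
    have hn' : (0:ℝ) < n := by exact_mod_cast hn
    have := cst_upper n m
    rw [div_le_div_iff₀ (by positivity) (by positivity)]
    linarith

lemma fact_bound (p : ℕ) : ∀ N : ℕ, p ≤ N →
    (N : ℝ) ^ p * (N - p).factorial ≤ Real.exp 1 ^ p * N.factorial := by
  induction p with
  | zero => intro N _; simp
  | succ p ih =>
    intro N hN
    obtain ⟨N, rfl⟩ := Nat.exists_eq_succ_of_ne_zero (by omega : N ≠ 0)
    have h := ih N (by omega)
    have key : ((N:ℝ)+1)^p ≤ Real.exp 1 * (N:ℝ)^p := by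
      rcases Nat.eq_zero_or_pos N with h0 | h0
      · have : p = 0 := by omega
        subst this; simp
      · have hN0 : (0:ℝ) < N := by exact_mod_cast h0
        have h3 : (N:ℝ) + 1 ≤ N * Real.exp (1/N) := by
          have := Real.add_one_le_exp (1/(N:ℝ))
          have := mul_le_mul_of_nonneg_left this hN0.le
          have e : (N:ℝ) * (1/N+1) = N + 1 := by field_simp; ring
          linarith
        calc ((N:ℝ)+1)^p ≤ (N * Real.exp (1/N))^p := by gcongr
          _ = Real.exp (p * (1/N)) * (N:ℝ)^p := by rw [mul_pow, ← Real.exp_nat_mul]; ring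
          _ ≤ Real.exp 1 * (N:ℝ)^p := by
            gcongr
            rw [mul_one_div, div_le_one hN0]
            exact_mod_cast (by omega : p ≤ N)
    rw [Nat.succ_sub_succ, Nat.factorial_succ]
    push_cast
    calc ((N:ℝ)+1)^(p+1) * (N-p).factorial = ((N:ℝ)+1)^p * (((N:ℝ)+1) * (N-p).factorial) := by ring
      _ ≤ Real.exp 1 * (N:ℝ)^p * (((N:ℝ)+1) * (N-p).factorial) := by gcongr
      _ = Real.exp 1 * ((N:ℝ)+1) * ((N:ℝ)^p * (N-p).factorial) := by ring
      _ ≤ Real.exp 1 * ((N:ℝ)+1) * (Real.exp 1 ^ p * N.factorial) := by gcongr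
      _ = _ := by ring

lemma fact_tendsto (p : ℕ) : Tendsto (fun N : ℕ => (N : ℝ) ^ p * (N - p).factorial / N.factorial)
    atTop (𝓝 1) := by
  induction p with
  | zero =>
    refine tendsto_const_nhds.congr (fun n => ?_)
    have : (n.factorial : ℝ) ≠ 0 := by positivity
    simp [this]
  | succ p ih =>
    have h := ih.div (sub_div_tendsto p) one_ne_zero
    rw [div_one] at h
    refine h.congr' ?_
    filter_upwards [eventually_gt_atTop p] with N hN
    obtain ⟨x, hx⟩ := Nat.exists_eq_succ_of_ne_zero (by omega : N - p ≠ 0)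
    have hx' : N - (p+1) = x := by omega
    have : (N : ℝ) ≠ 0 := by exact_mod_cast (by omega : N ≠ 0)
    have : (N.factorial : ℝ) ≠ 0 := by positivity
    simp only [Pi.div_apply]
    rw [hx, hx', Nat.succ_eq_add_one, Nat.factorial_succ]
    push_cast
    field_simp
    ring

/-- Tannery's theorem in the form needed. -/
lemma tannery (r B : ℝ) (hr : 0 < r) (hB : 0 ≤ B) (w : ℕ → ℝ)
    (hw : Tendsto (fun n => w n / ((2 * n).factorial * r ^ n)) atTop (𝓝 1))
    (g : ℕ → ℕ → ℝ) (l : ℕ → ℝ)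
    (hg0 : ∀ n m, 0 ≤ g n m)
    (hg : ∀ n m, g n m ≤ B ^ m / m.factorial * (n : ℝ) ^ (2 * m))
    (hl : ∀ m, Tendsto (fun n : ℕ => g n m / (n : ℝ) ^ (2 * m)) atTop (𝓝 (l m))) :
    Tendsto (fun n => (∑ m ∈ Finset.range (n + 1), g n m * w (n - m)) /
      ((2 * n).factorial * r ^ n)) atTop (𝓝 (∑' m, l m * (1 / (4 * r)) ^ m)) := by
  obtain ⟨K, hK⟩ : ∃ K, ∀ n, |w n / ((2 * n).factorial * r ^ n)| ≤ K := by
    obtain ⟨K, hK⟩ := hw.abs.bddAbove_range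
    exact ⟨K, fun n => hK ⟨n, rfl⟩⟩
  have hK0 : 0 ≤ K := (abs_nonneg _).trans (hK 0)
  set F : ℕ → ℕ → ℝ := fun n m => if m ∈ Finset.range (n+1) then
    g n m * w (n - m) / ((2 * n).factorial * r ^ n) else 0 with hF
  have hsum : ∀ n, (∑ m ∈ Finset.range (n + 1), g n m * w (n - m)) /
      ((2 * n).factorial * r ^ n) = ∑' m, F n m := by
    intro n
    rw [tsum_eq_sum (s := Finset.range (n+1))]
    · rw [Finset.sum_div]
      refine Finset.sum_congr rfl (fun m hm => ?_)
      simp only [hF, if_pos hm]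
    · intro m hm; simp only [hF, if_neg hm]
  simp only [hsum]
  have hdec : ∀ n m, m ≤ n → g n m * w (n - m) / ((2 * n).factorial * r ^ n) =
      g n m * (w (n-m) / ((2 * (n-m)).factorial * r ^ (n-m))) *
        ((2 * n - 2 * m).factorial / (2*n).factorial * (1/r)^m) := by
    intro n m hm
    have e : r ^ n = r^(n-m) * r^m := by rw [← pow_add]; congr 1; omega
    rw [e, ← Nat.mul_sub]
    have := ((2*n).factorial_ne_zero)
    have := ((2*(n-m)).factorial_ne_zero)
    field_simp
    rw [one_div, inv_pow]
    field_simp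
  refine tendsto_tsum_of_dominated_convergence
    (bound := fun m => K * ((B * Real.exp 1 ^ 2 / (4 * r)) ^ m / m.factorial)) ?_ ?_ ?_
  · exact (Real.summable_pow_div_factorial _).mul_left K
  · intro m
    have h1 := (fact_tendsto (2*m)).comp (tendsto_id.const_mul_atTop' (two_pos : 0 < 2))
    have h2 := hw.comp (tendsto_sub_atTop_nat m)
    have h3 := ((hl m).mul h2).mul (h1.mul_const ((1/(4*r))^m))
    rw [mul_one, one_mul] at h3
    refine h3.congr' ?_
    filter_upwards [eventually_ge_atTop (m+1)] with n hn
    have hm : m ∈ Finset.range (n+1) := by simp; omega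
    simp only [hF, if_pos hm]
    rw [hdec n m (by omega)]
    have : (n : ℝ) ≠ 0 := by exact_mod_cast (by omega : n ≠ 0)
    simp only [Function.comp, id]
    push_cast
    have e : (1/(4*r))^m = (1/r)^m / 2^(2*m) := by
      rw [pow_mul, ← div_pow]; congr 1; field_simp; norm_num
    rw [e, mul_pow]
    have := ((2*n).factorial_ne_zero)
    field_simp
  · filter_upwards with n m
    by_cases hm : m ∈ Finset.range (n+1)
    · simp only [hF, if_pos hm]
      have hm' : m ≤ n := by simp at hm; omega
      rw [hdec n m hm', Real.norm_eq_abs, abs_mul, abs_mul, abs_of_nonneg (hg0 n m)]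
      have hpos : 0 ≤ ((2 * n - 2 * m).factorial / (2*n).factorial * (1/r)^m : ℝ) := by positivity
      rw [abs_of_nonneg hpos]
      have hb := fact_bound (2*m) (2*n) (by omega)
      have hfp : (0:ℝ) < (2*n).factorial := by positivity
      have hb2 : (n:ℝ)^(2*m) * ((2 * n - 2 * m).factorial / (2*n).factorial) ≤ (Real.exp 1 ^2/4)^m := by
        rw [← mul_div_assoc, div_le_iff₀ hfp, div_pow, div_mul_eq_mul_div, le_div_iff₀ (by positivity)]
        push_cast at hb
        rw [mul_pow, pow_mul 2, pow_mul (Real.exp 1)] at hb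
        norm_num at hb ⊢
        linarith
      calc g n m * |w (n-m) / ((2 * (n-m)).factorial * r ^ (n-m))| * ((2 * n - 2 * m).factorial / (2*n).factorial * (1/r)^m)
          ≤ (B ^ m / m.factorial * (n : ℝ) ^ (2 * m)) * K * ((2 * n - 2 * m).factorial / (2*n).factorial * (1/r)^m) := by
            gcongr
            · exact hg n m
            · exact hK _
        _ = (B ^ m / m.factorial) * K * (1/r)^m * ((n:ℝ)^(2*m) * ((2 * n - 2 * m).factorial / (2*n).factorial)) := by ring
        _ ≤ (B ^ m / m.factorial) * K * (1/r)^m * (Real.exp 1 ^2/4)^m := by gcongr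
        _ = _ := by
          have : B * Real.exp 1 ^ 2 / (4 * r) = B * (1/r) * (Real.exp 1 ^2/4) := by field_simp
          rw [this, mul_pow, mul_pow]; ring
    · simp only [hF, if_neg hm, norm_zero]; positivity

lemma cst_self (n : ℕ) : cst (n + 1) (n + 1) = 0 := by
  induction n with
  | zero => simp [cst]
  | succ n ih => rw [cst, ih, cst_zero_of_lt _ _ (by omega)]; simp

lemma stirling_rec (n j : ℕ) : stirling1 (n + 1) (j + 1) = stirling1 n j + n * stirling1 n (j + 1) := by
  unfold stirling1
  rw [Finset.prod_range_succ, mul_add, Polynomial.coeff_add, Polynomial.coeff_mul_X,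
    Polynomial.coeff_mul_C]
  ring

lemma stirling_rec_zero (n : ℕ) : stirling1 (n + 1) 0 = n * stirling1 n 0 := by
  unfold stirling1
  rw [Finset.prod_range_succ, mul_add, Polynomial.coeff_add, Polynomial.coeff_mul_X_zero,
    Polynomial.coeff_mul_C]
  ring

lemma stirling_zero_of_lt (n : ℕ) : ∀ j, n < j → stirling1 n j = 0 := by
  induction n with
  | zero => intro j hj; simp [stirling1, Polynomial.coeff_one, hj.ne']
  | succ n ih =>
    intro j hj
    obtain ⟨j, rfl⟩ := Nat.exists_eq_succ_of_ne_zero (by omega : j ≠ 0)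
    rw [Nat.succ_eq_add_one, stirling_rec, ih j (by omega), ih (j+1) (by omega)]; simp

lemma stirling_eq_cst (n : ℕ) : ∀ j m, j + m = n → stirling1 n j = cst n m := by
  induction n with
  | zero =>
    intro j m h
    obtain rfl : j = 0 := by omega
    obtain rfl : m = 0 := by omega
    simp [stirling1, cst]
  | succ n ih =>
    intro j m h
    rcases j with _ | j
    · obtain rfl : m = n + 1 := by omega
      rw [stirling_rec_zero, cst, cst_zero_of_lt n (n+1) (by omega), ih 0 n (by omega)]; simp
    · rcases m with _ | m
      · obtain rfl : j = n := by omega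
        rw [stirling_rec, cst, stirling_zero_of_lt j (j+1) (by omega), ih j 0 (by omega)]; simp
      · rw [stirling_rec, cst, ih j (m+1) (by omega), ih (j+1) m (by omega)]

lemma bern_tendsto (x : ℝ) (hx : x ∈ Set.Icc (0:ℝ) 1) :
    Tendsto (fun n : ℕ => (-1 : ℝ) ^ (n + 1) * (2 * Real.pi) ^ (2 * n + 1) / 2 / (2 * n + 1).factorial *
        (Polynomial.map (algebraMap ℚ ℝ) (Polynomial.bernoulli (2 * n + 1))).eval x) atTop
      (𝓝 (Real.sin (2 * Real.pi * x))) := by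
  have h : Tendsto (fun n : ℕ => ∑' j : ℕ, 1 / (j : ℝ) ^ (2 * n + 1) * Real.sin (2 * Real.pi * j * x)) atTop
      (𝓝 (∑' j : ℕ, if j = 1 then Real.sin (2 * Real.pi * x) else 0)) := by
    refine tendsto_tsum_of_dominated_convergence (bound := fun j : ℕ => 1 / (j : ℝ) ^ 2)
      (Real.summable_one_div_nat_pow.mpr (by norm_num)) ?_ ?_
    · intro j
      rcases j with _ | _ | j
      · simp
      · simp
      · have h0 : Tendsto (fun n : ℕ => (1 / ((j + 1 + 1 : ℕ) : ℝ)) ^ (2 * n + 1)) atTop (𝓝 0) := by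
          have h1 : Tendsto (fun n : ℕ => 2 * n + 1) atTop atTop :=
            tendsto_atTop_mono (fun n => by omega : ∀ n : ℕ, n ≤ 2 * n + 1) tendsto_id
          refine (tendsto_pow_atTop_nhds_zero_of_lt_one (by positivity) ?_).comp h1
          rw [div_lt_one (by positivity)]
          exact_mod_cast (by omega : 1 < j + 1 + 1)
        have h2 := h0.mul_const (Real.sin (2 * Real.pi * ((j + 1 + 1 : ℕ) : ℝ) * x))
        simp only [one_div_pow, zero_mul] at h2
        rw [if_neg (by omega)]
        exact h2
    · filter_upwards [eventually_ge_atTop 1] with n hn j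
      rw [norm_mul]
      rcases Nat.eq_zero_or_pos j with rfl | hj
      · simp
      · have hj' : (1:ℝ) ≤ j := by exact_mod_cast hj
        have h1 : ‖Real.sin (2 * Real.pi * j * x)‖ ≤ 1 := Real.abs_sin_le_one _
        have h2 : ‖1 / (j : ℝ) ^ (2 * n + 1)‖ ≤ 1 / (j:ℝ)^2 := by
          rw [Real.norm_of_nonneg (by positivity)]
          apply one_div_le_one_div_of_le (by positivity)
          exact pow_le_pow_right₀ hj' (by omega)
        calc _ ≤ 1 / (j:ℝ)^2 * 1 := by gcongr
          _ = _ := mul_one _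
  rw [tsum_ite_eq] at h
  refine h.congr' ?_
  filter_upwards [eventually_ge_atTop 1] with n hn
  exact (hasSum_one_div_nat_pow_mul_sin (by omega : n ≠ 0) hx).tsum_eq

lemma Cf_tendsto (M : ℕ) (hM : 0 < M) (f : ℤ → ℝ) :
    Tendsto (fun n => Cf M f 0 n / ((2 * n).factorial * (((M : ℝ) / (2 * Real.pi)) ^ 2) ^ n)) atTop
      (𝓝 (∑ m ∈ Finset.Icc 1 M, f m * Real.sin (2 * Real.pi * ((m : ℝ) / M)) / Real.pi)) := by
  have hM' : (0:ℝ) < M := by exact_mod_cast hM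
  have h := tendsto_finsetSum (Finset.Icc 1 M) (fun m hm =>
    ((bern_tendsto ((m:ℝ) / M) ⟨by positivity, by
      rw [div_le_one hM']; exact_mod_cast (Finset.mem_Icc.mp hm).2⟩).const_mul (f m)).div_const Real.pi)
  refine h.congr (fun n => ?_)
  unfold Cf
  rw [Finset.mul_sum, Finset.sum_div]
  refine Finset.sum_congr rfl (fun m _ => ?_)
  have e : (((Polynomial.bernoulli (2 * n + 0 + 1)).eval ((m : ℚ) / (M : ℚ)) : ℚ) : ℝ) =
     (Polynomial.map (algebraMap ℚ ℝ) (Polynomial.bernoulli (2 * n + 1))).eval ((m:ℝ)/M) := by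
    have : ((m:ℝ)/M) = algebraMap ℚ ℝ ((m:ℚ)/M) := by simp
    rw [this, Polynomial.eval_map_algebraMap, Polynomial.aeval_algebraMap_apply]
    simp
  rw [e]
  generalize (Polynomial.map (algebraMap ℚ ℝ) (Polynomial.bernoulli (2 * n + 1))).eval ((m:ℝ)/M) = y
  rw [Nat.factorial_succ, ← pow_mul, div_pow, pow_succ (2 * Real.pi)]
  have := (2*n).factorial_ne_zero
  have := Real.pi_pos
  have : (2 * (n:ℝ) + 1) ≠ 0 := by positivity
  push_cast
  simp only [add_zero]
  field_simp

lemma chi_sum_s19 (k : ℕ) (hk : 1 ≤ k) :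
    ∑ m ∈ Finset.Icc 1 (4 * k + 2), chiK k m * Real.sin (2 * Real.pi * ((m : ℝ) / ((4 * k + 2 : ℕ) : ℝ))) / Real.pi
      = 4 * Real.cos (Real.pi / (2 * (2 * k + 1))) / Real.pi := by
  have hsub : ({k, k + 1, 3 * k + 1, 3 * k + 2} : Finset ℕ) ⊆ Finset.Icc 1 (4 * k + 2) := by
    intro m hm
    simp only [Finset.mem_insert, Finset.mem_singleton] at hm
    rw [Finset.mem_Icc]; omega
  have m1 : (k : ℤ) % (4 * k + 2) = k := Int.emod_eq_of_lt (by omega) (by omega)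
  have m2 : ((k : ℤ) + 1) % (4 * k + 2) = k + 1 := Int.emod_eq_of_lt (by omega) (by omega)
  have m3 : (-(k : ℤ)) % (4 * k + 2) = 3 * k + 2 := by
    rw [← Int.add_emod_right, Int.emod_eq_of_lt] <;> omega
  have m4 : (-(k : ℤ) - 1) % (4 * k + 2) = 3 * k + 1 := by
    rw [← Int.add_emod_right, Int.emod_eq_of_lt] <;> omega
  have hval : ∀ m : ℕ, m < 4 * k + 2 → chiK k m = if (m = k ∨ m = k + 1) then 1 else
      if (m = 3 * k + 2 ∨ m = 3 * k + 1) then -1 else 0 := by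
    intro m hm
    have m0 : (m : ℤ) % (4 * k + 2) = m := Int.emod_eq_of_lt (by omega) (by omega)
    unfold chiK
    rw [m1, m2, m3, m4, m0]
    norm_cast
  have hlast : chiK k ((4 * k + 2 : ℕ) : ℤ) = 0 := by
    have m0 : ((4 * k + 2 : ℕ) : ℤ) % (4 * k + 2) = 0 := by push_cast; exact Int.emod_self
    unfold chiK
    rw [m1, m2, m3, m4, m0, if_neg (by omega), if_neg (by omega)]
  rw [← Finset.sum_subset hsub]
  · rw [Finset.sum_insert (by simp; omega), Finset.sum_insert (by simp; omega),
      Finset.sum_insert (by simp), Finset.sum_singleton]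
    have v1 : chiK k k = 1 := by rw [hval k (by omega), if_pos (by omega)]
    have v2 : chiK k ((k + 1 : ℕ) : ℤ) = 1 := by rw [hval (k+1) (by omega), if_pos (by omega)]
    have v3 : chiK k ((3 * k + 1 : ℕ) : ℤ) = -1 := by
      rw [hval (3*k+1) (by omega), if_neg (by omega), if_pos (by omega)]
    have v4 : chiK k ((3 * k + 2 : ℕ) : ℤ) = -1 := by
      rw [hval (3*k+2) (by omega), if_neg (by omega), if_pos (by omega)]
    rw [v1, v2, v3, v4]
    have hb : (2 * (k:ℝ) + 1) ≠ 0 := by positivity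
    set θ := Real.pi / (2 * (2 * (k:ℝ) + 1)) with hθ
    have s1 : Real.sin (2 * Real.pi * ((k : ℝ) / ((4 * k + 2 : ℕ) : ℝ))) = Real.cos θ := by
      rw [← Real.sin_pi_div_two_sub]; congr 1; rw [hθ]; push_cast
      rw [show (4 * (k:ℝ) + 2) = 2 * (2 * k + 1) by ring]; field_simp; ring
    have s2 : Real.sin (2 * Real.pi * (((k + 1 : ℕ) : ℝ) / ((4 * k + 2 : ℕ) : ℝ))) = Real.cos θ := by
      rw [← Real.cos_neg, ← Real.sin_pi_div_two_sub]; congr 1; rw [hθ]; push_cast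
      rw [show (4 * (k:ℝ) + 2) = 2 * (2 * k + 1) by ring]; field_simp; ring
    have s3 : Real.sin (2 * Real.pi * (((3 * k + 1 : ℕ) : ℝ) / ((4 * k + 2 : ℕ) : ℝ))) = - Real.cos θ := by
      rw [← Real.cos_neg θ, ← Real.sin_pi_div_two_sub, ← Real.sin_sub_two_pi, ← Real.sin_neg]; congr 1; rw [hθ]; push_cast
      rw [show (4 * (k:ℝ) + 2) = 2 * (2 * k + 1) by ring]; field_simp; ring
    have s4 : Real.sin (2 * Real.pi * (((3 * k + 2 : ℕ) : ℝ) / ((4 * k + 2 : ℕ) : ℝ))) = - Real.cos θ := by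
      rw [← Real.sin_pi_div_two_sub, ← Real.sin_sub_two_pi, ← Real.sin_neg]; congr 1; rw [hθ]; push_cast
      rw [show (4 * (k:ℝ) + 2) = 2 * (2 * k + 1) by ring]; field_simp; ring
    rw [s1, s2, s3, s4]
    ring
  · intro m hm hm'
    simp only [Finset.mem_insert, Finset.mem_singleton, not_or] at hm'
    rw [Finset.mem_Icc] at hm
    have : chiK k m = 0 := by
      rcases Nat.lt_or_ge m (4 * k + 2) with h | h
      · rw [hval m h, if_neg (by omega), if_neg (by omega)]
      · obtain rfl : m = 4 * k + 2 := by omega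
        exact hlast
    rw [this]; simp

lemma central_tendsto : Tendsto (fun n : ℕ => ((2 * n).factorial : ℝ) * Real.sqrt n /
    ((n.factorial : ℝ) ^ 2 * 4 ^ n)) atTop (𝓝 (1 / Real.sqrt Real.pi)) := by
  have h := Stirling.tendsto_stirlingSeq_sqrt_pi
  have hp : Real.sqrt Real.pi ≠ 0 := (Real.sqrt_pos.mpr Real.pi_pos).ne'
  have h2 := (h.comp (tendsto_id.const_mul_atTop' (two_pos : 0 < 2))).div (h.pow 2) (pow_ne_zero 2 hp)
  have e : Real.sqrt Real.pi / Real.sqrt Real.pi ^ 2 = 1 / Real.sqrt Real.pi := by field_simp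
  rw [e] at h2
  refine h2.congr' ?_
  filter_upwards [eventually_gt_atTop 0] with n hn
  have hn' : (0:ℝ) < n := by exact_mod_cast hn
  simp only [Pi.div_apply, Function.comp, id, Stirling.stirlingSeq]
  push_cast
  have e1 : Real.sqrt (2 * (2 * n)) = 2 * Real.sqrt n := by
    rw [show (2 * (2 * (n:ℝ))) = 2^2 * n by ring, Real.sqrt_mul (by positivity), Real.sqrt_sq (by norm_num)]
  have e2 : Real.sqrt (2 * n) ^ 2 = 2 * n := Real.sq_sqrt (by positivity)
  have e3 : (2 * (n:ℝ) / Real.exp 1) ^ (2 * n) = 4 ^ n * ((n / Real.exp 1) ^ n) ^ 2 := by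
    rw [mul_div_assoc, mul_pow, pow_mul 2, mul_comm 2 n, pow_mul _ n 2]; norm_num
  rw [e1, e3, div_pow (n.factorial : ℝ), mul_pow, e2]
  have : 0 < Real.sqrt n := Real.sqrt_pos.mpr hn'
  have hq : 0 < ((n:ℝ) / Real.exp 1) ^ n := by positivity
  generalize ((n:ℝ) / Real.exp 1) ^ n = q at *
  have hs : (n:ℝ) = Real.sqrt n * Real.sqrt n := (Real.mul_self_sqrt hn'.le).symm
  have := n.factorial_ne_zero
  field_simp
  rw [sq, ← hs]

/-- The coefficients `ξ_{𝒢_k}(n)` of `𝒢_k(1−q)` (obtained from the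
construction with `f = χ_k`, `M = 4k+2`, `ν = 0`, `a = k²`, `b = 2k+1`) satisfy
`ξ_{𝒢_k}(n) ~ cos(π/(2(2k+1))) 2^(2n+2) n! / (π^(3/2) √n) · ((2k+1)/π²)^n
· e^(π²/(8(2k+1)))` as `n → ∞`. -/
theorem G_series_asymptotic (k : ℕ) (hk : 1 ≤ k) :
    Filter.Tendsto
      (fun n : ℕ =>
        xif (4 * k + 2) (chiK k) 0 (k ^ 2) (2 * k + 1) n /
          (Real.cos (Real.pi / (2 * (2 * k + 1))) * 2 ^ (2 * n + 2) *
            (n.factorial : ℝ) / (Real.pi ^ ((3 : ℝ) / 2) * Real.sqrt n) *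
            ((2 * k + 1 : ℝ) / Real.pi ^ 2) ^ n *
            Real.exp (Real.pi ^ 2 / (8 * (2 * k + 1)))))
      Filter.atTop (nhds 1) := by
  have hpi := Real.pi_pos
  have hb : (0:ℝ) < 2 * k + 1 := by positivity
  have hk' : (1:ℝ) ≤ k := by exact_mod_cast hk
  set c := Real.cos (Real.pi / (2 * (2 * (k:ℝ) + 1))) with hc
  have hc0 : 0 < c := by
    apply Real.cos_pos_of_mem_Ioo
    constructor
    · have : 0 < Real.pi / (2 * (2 * (k:ℝ) + 1)) := by positivity
      linarith
    · rw [div_lt_div_iff₀ (by positivity) (by positivity)]; nlinarith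
  set L := 4 * c / Real.pi with hL
  have hL0 : 0 < L := by positivity
  have hC := Cf_tendsto (4 * k + 2) (by omega) (chiK k)
  rw [chi_sum_s19 k hk, ← hc, ← hL] at hC
  have hr1 : (((4 * k + 2 : ℕ) : ℝ) / (2 * Real.pi)) ^ 2 = (2 * k + 1) * ((2 * k + 1) / Real.pi ^ 2) := by
    push_cast; field_simp; ring
  rw [hr1] at hC
  set r := (2 * (k:ℝ) + 1) / Real.pi ^ 2 with hr
  have hr0 : 0 < r := by positivity
  -- D_n
  have hD := tannery ((2 * k + 1) * r) ((k:ℝ) ^ 2) (by positivity) (by positivity)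
    (fun n => Cf (4 * k + 2) (chiK k) 0 n / L)
    (by
      have := hC.div_const L
      rw [div_self hL0.ne'] at this
      refine this.congr (fun n => ?_)
      rw [div_right_comm])
    (fun n m => (n.choose m : ℝ) * ((k:ℝ) ^ 2) ^ m) (fun m => if m = 0 then 1 else 0)
    (fun n m => by positivity)
    (fun n m => by
      have h1 : (n.choose m : ℝ) ≤ (n:ℝ) ^ m / m.factorial := Nat.choose_le_pow_div m n
      have h2 : (n:ℝ) ^ m ≤ (n:ℝ) ^ (2 * m) := by
        rcases Nat.eq_zero_or_pos n with h | h
        · subst h; rcases Nat.eq_zero_or_pos m with h | h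
          · subst h; simp
          · simp [h.ne']
        · exact pow_le_pow_right₀ (by exact_mod_cast h) (by omega)
      calc (n.choose m : ℝ) * ((k:ℝ) ^ 2) ^ m ≤ (n:ℝ) ^ (2 * m) / m.factorial * ((k:ℝ) ^ 2) ^ m := by
            gcongr; exact h1.trans (by gcongr)
        _ = _ := by ring)
    (fun m => by
      rcases Nat.eq_zero_or_pos m with h | h
      · subst h; simp
      · rw [if_neg h.ne']
        have hu : Tendsto (fun n : ℕ => ((k:ℝ) ^ 2) ^ m * (1 / (n:ℝ)) ^ m) atTop (𝓝 0) := by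
          have := (tendsto_one_div_atTop_nhds_zero_nat (𝕜 := ℝ)).pow m
          rw [zero_pow h.ne'] at this
          simpa using this.const_mul (((k:ℝ) ^ 2) ^ m)
        refine squeeze_zero' (Eventually.of_forall (fun n => by positivity)) ?_ hu
        filter_upwards [eventually_gt_atTop 0] with n hn
        have hn' : (0:ℝ) < n := by exact_mod_cast hn
        have h1 : (n.choose m : ℝ) ≤ (n:ℝ) ^ m := by exact_mod_cast Nat.choose_le_pow n m
        rw [div_le_iff₀ (by positivity)]
        calc (n.choose m : ℝ) * ((k:ℝ) ^ 2) ^ m ≤ (n:ℝ) ^ m * ((k:ℝ) ^ 2) ^ m := by gcongr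
          _ = _ := by
            rw [one_div, inv_pow, two_mul, pow_add]; field_simp)
  have ht : ∑' m : ℕ, (if m = 0 then (1:ℝ) else 0) * (1 / (4 * ((2 * (k:ℝ) + 1) * r))) ^ m = 1 := by
    rw [tsum_eq_single 0]
    · simp
    · intro m hm; simp [hm]
  rw [ht] at hD
  have hD2 : Tendsto (fun n => (Df (4 * k + 2) (chiK k) 0 (k ^ 2) (2 * k + 1) n / L) /
      ((2 * n).factorial * r ^ n)) atTop (𝓝 1) := by
    refine hD.congr (fun n => ?_)
    unfold Df
    rw [← Finset.sum_range_reflect (fun j => (n.choose j : ℝ) * ((k ^ 2 : ℕ) : ℝ) ^ (n - j) * Cf (4 * k + 2) (chiK k) 0 j)]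
    have e : ∀ m ∈ Finset.range (n + 1),
        (n.choose (n + 1 - 1 - m) : ℝ) * ((k ^ 2 : ℕ) : ℝ) ^ (n - (n + 1 - 1 - m)) *
          Cf (4 * k + 2) (chiK k) 0 (n + 1 - 1 - m) =
        L * ((n.choose m : ℝ) * ((k:ℝ) ^ 2) ^ m * (Cf (4 * k + 2) (chiK k) 0 (n - m) / L)) := by
      intro m hm
      have hm' : m ≤ n := by simp at hm; omega
      rw [Nat.add_sub_cancel, Nat.choose_symm hm', Nat.sub_sub_self hm']
      push_cast
      field_simp
    rw [Finset.sum_congr rfl e, ← Finset.mul_sum]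
    generalize ∑ m ∈ Finset.range (n + 1), ((n.choose m : ℝ) * ((k:ℝ) ^ 2) ^ m * (Cf (4 * k + 2) (chiK k) 0 (n - m) / L)) = S
    rw [mul_pow]
    push_cast
    have := (2*n).factorial_ne_zero
    field_simp
  -- ξ(n)
  have hX := tannery r (1/2) hr0 (by norm_num) _ hD2 cst (fun m => 1 / (2 ^ m * m.factorial)) cst_nonneg
    (fun n m => by
      have h := cst_upper n m
      rw [one_div_pow, div_div, div_mul_eq_mul_div, one_mul, le_div_iff₀ (by positivity)]
      exact h) cst_tendsto
  have ht2 : ∑' m : ℕ, (1 / (2 ^ m * (m.factorial : ℝ))) * (1 / (4 * r)) ^ m =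
      Real.exp (Real.pi ^ 2 / (8 * (2 * k + 1))) := by
    rw [Real.exp_eq_exp_ℝ, NormedSpace.exp_eq_tsum_div]
    refine tsum_congr (fun m => ?_)
    have : Real.pi ^ 2 / (8 * (2 * (k:ℝ) + 1)) = (1/2) * (1 / (4 * r)) := by rw [hr]; field_simp; norm_num
    rw [this, mul_pow, one_div_pow 2]
    field_simp
  rw [ht2] at hX
  set E := Real.exp (Real.pi ^ 2 / (8 * (2 * (k:ℝ) + 1))) with hE
  have hE0 : 0 < E := Real.exp_pos _
  have hfin := (hX.div_const E).mul (central_tendsto.mul_const (Real.sqrt Real.pi))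
  have hsp : 0 < Real.sqrt Real.pi := Real.sqrt_pos.mpr hpi
  rw [div_self hE0.ne', one_div_mul_cancel hsp.ne', one_mul] at hfin
  refine hfin.congr' ?_
  filter_upwards [eventually_gt_atTop 0] with n hn
  have hn' : (0:ℝ) < n := by exact_mod_cast hn
  have hsn : 0 < Real.sqrt n := Real.sqrt_pos.mpr hn'
  have hp32 : Real.pi ^ ((3:ℝ)/2) = Real.pi * Real.sqrt Real.pi := by
    rw [Real.sqrt_eq_rpow, show (3:ℝ)/2 = 1 + 1/2 by norm_num, Real.rpow_add hpi, Real.rpow_one]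
  have hxi : xif (4 * k + 2) (chiK k) 0 (k ^ 2) (2 * k + 1) n = (1 / (n.factorial : ℝ)) *
      (L * ∑ m ∈ Finset.range (n + 1), cst n m * (Df (4 * k + 2) (chiK k) 0 (k ^ 2) (2 * k + 1) (n - m) / L)) := by
    obtain ⟨n, rfl⟩ := Nat.exists_eq_succ_of_ne_zero hn.ne'
    rw [Nat.succ_eq_add_one, xif, Finset.sum_range_succ _ (n+1), cst_self, zero_mul, add_zero]
    congr 1
    rw [Finset.mul_sum]
    refine Finset.sum_congr rfl (fun m hm => ?_)
    have hm' : m < n + 1 := by simpa using hm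
    rw [stirling_eq_cst (n+1) (n+1-m) m (by omega)]
    field_simp
  rw [hxi, hp32]
  generalize ∑ m ∈ Finset.range (n + 1), cst n m * (Df (4 * k + 2) (chiK k) 0 (k ^ 2) (2 * k + 1) (n - m) / L) = S
  have hss : Real.sqrt n * Real.sqrt n = n := Real.mul_self_sqrt hn'.le
  have h4 : (2:ℝ) ^ (2 * n + 2) = 4 * 4 ^ n := by rw [pow_add, pow_mul]; norm_num; ring
  rw [h4, hL]
  have := (2*n).factorial_ne_zero
  have := n.factorial_ne_zero
  field_simp
end
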